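/- arXiv:1712.01149 — 3 statements merged into one kernel-verified Lean document; each statement's English description precedes it below -/
import Mathlib

section
/- There exists an (11, 165) strategy for the GKS game; equivalently, the cost of the GKS game on 165 variables satisfies C(165) ≤ 11. -/
/-- The string produced in the GKS game on `n` variables when Eve reveals the
indices in the order `π 0, π 1, …, π (n-1)`, Alice plays according to
strategy `a` (which, given the nonempty list of indices revealed so far,
outputs the bit placed at the most recently revealed index) at the first
`n - 1` revealed indices, and Eve places the bit `b` at the last revealed
index `π (n-1)`. -/
def gksString (n : ℕ) (a : List (Fin n) → Bool) (π : Equiv.Perm (Fin n))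
    (b : Bool) : Fin n → Bool :=
  fun j =>
    if ((π.symm j : Fin n) : ℕ) = n - 1 then b
    else a (((List.finRange n).take (((π.symm j : Fin n) : ℕ) + 1)).map (⇑π))

/-- `(a, B)` is a `(k, n)` strategy for the GKS game: for every order `π` in
which Eve reveals the indices and every bit `b` placed by Eve at the last
revealed index `π (n-1)`, the resulting string `x` satisfies
`π (n-1) ∈ B x` and `(B x).card ≤ k`. -/
def IsGKSStrategy (k n : ℕ) (a : List (Fin n) → Bool)
    (B : (Fin n → Bool) → Finset (Fin n)) : Prop :=
  ∀ (π : Equiv.Perm (Fin n)) (b : Bool),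
    (∀ i : Fin n, (i : ℕ) = n - 1 → π i ∈ B (gksString n a π b)) ∧
    (B (gksString n a π b)).card ≤ k

/-- There exists a `(k, n)` strategy for the GKS game. -/
def HasGKSStrategy (k n : ℕ) : Prop :=
  ∃ (a : List (Fin n) → Bool) (B : (Fin n → Bool) → Finset (Fin n)),
    IsGKSStrategy k n a B

/-- The cost `C(n)` of the GKS game on `n` variables: the least `k` for which
a `(k, n)` strategy exists. -/
noncomputable def gksCost (n : ℕ) : ℕ :=
  sInf {k : ℕ | HasGKSStrategy k n}

/-!
Split the `165` indices into `11` blocks of `15` positions. In each block Alice answers `1` on the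
first four positions revealed, forming a set `F`, then follows a codeword `c F` of the Hamming code
that is `1` on `F`, and flips the last position of the block. The codewords `c F` are chosen
distinct, hence at distance at least three, so a block still determines `F` together with the
flipped position. If Eve leaves her block at a codeword `c F`, then Bob answers its `11` positions
outside `F`; otherwise every block is flipped, and he answers the `11` flipped positions.

Distinct codewords exist by Hall's theorem: give each pair of a four-set `F` and a codeword with
support `S ⊇ F` the weight `1 / (#S).choose 4`. The total weight at `S` is at most one because `S`
has `(#S).choose 4` subsets `F`. The total weight at `F` is at least one because any seven positions
of a codeword can be prescribed, equally often for each choice, so that among the codewords above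
`F` the first three binomial moments of `#(S \ F)` are those of a uniformly random subset of the
other `11` positions, and the weight is bounded below by a cubic in `#(S \ F)`.
-/

namespace GKS

open Finset
open scoped symmDiff

section FractionalMatching

variable {α β K : Type*} [DecidableEq β] [Semiring K] [LinearOrder K] [IsStrictOrderedRing K]

theorem card_le_card_biUnion_of_fractional_matching {s : Finset α} {r : α → Finset β}
    {w : α → β → K} (row : ∀ a ∈ s, 1 ≤ ∑ b ∈ r a, w a b)
    (col : ∀ b, ∑ a ∈ s with b ∈ r a, w a b ≤ 1) : #s ≤ #(s.biUnion r) := by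
  have cast_le : (#s : K) ≤ #(s.biUnion r) := calc
    (#s : K) = ∑ a ∈ s, 1 := by simp
    _ ≤ ∑ a ∈ s, ∑ b ∈ r a, w a b := sum_le_sum row
    _ = ∑ b ∈ s.biUnion r, ∑ a ∈ s with b ∈ r a, w a b := sum_comm' (by grind)
    _ ≤ ∑ b ∈ s.biUnion r, 1 := sum_le_sum fun b _ => col b
    _ = #(s.biUnion r) := by simp
  exact_mod_cast cast_le

theorem exists_injOn_of_fractional_matching [Nonempty β] {s : Finset α} {r : α → Finset β}
    {w : α → β → K} (nonneg : ∀ a ∈ s, ∀ b ∈ r a, 0 ≤ w a b)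
    (row : ∀ a ∈ s, 1 ≤ ∑ b ∈ r a, w a b) (col : ∀ b, ∑ a ∈ s with b ∈ r a, w a b ≤ 1) :
    ∃ f : α → β, Set.InjOn f s ∧ ∀ a ∈ s, f a ∈ r a := by
  have hall (A : Finset s) : #A ≤ #(A.biUnion fun a => r a) := by
    have sub : A.map (.subtype _) ⊆ s := map_subtype_subset A
    calc
      #A = #(A.map (.subtype _)) := (card_map _).symm
      _ ≤ #((A.map (.subtype _)).biUnion r) :=
        card_le_card_biUnion_of_fractional_matching (fun a ha => row a (sub ha)) fun b =>
          (sum_le_sum_of_subset_of_nonneg (filter_subset_filter _ sub) (by grind)).trans (col b)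
      _ = #(A.biUnion fun a => r a) := by
        classical rw [map_eq_image, image_biUnion]; rfl
  obtain ⟨f, f_inj, f_mem⟩ := (all_card_le_biUnion_card_iff_exists_injective _).1 hall
  have f_extend (a : s) : Function.extend Subtype.val f (fun _ => Classical.arbitrary β) a = f a :=
    Subtype.val_injective.extend_apply ..
  refine ⟨Function.extend Subtype.val f fun _ => Classical.arbitrary β, ?_, ?_⟩
  · intro a ha b hb hab
    exact congrArg Subtype.val (@f_inj ⟨a, ha⟩ ⟨b, hb⟩ (by simpa only [← f_extend] using hab))
  · exact fun a ha => (f_extend ⟨a, ha⟩).symm ▸ f_mem ⟨a, ha⟩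

end FractionalMatching

section Syndrome

variable {ι V : Type*} [AddCommGroup V]

/-- The syndrome of the binary word with support `S`, for the parity-check matrix whose columns
are the vectors `h i`. The words of zero syndrome form the linear code with that matrix. -/
def syndrome (h : ι → V) (S : Finset ι) : V :=
  ∑ i ∈ S, h i

variable [Module (ZMod 2) V] {h : ι → V}

theorem syndrome_symmDiff [DecidableEq ι] (S T : Finset ι) :
    syndrome h (S ∆ T) = syndrome h S + syndrome h T := by
  have sum_inter (S T : Finset ι) : syndrome h (S ∩ T) + syndrome h (S \ T) = syndrome h S :=
    sum_inter_add_sum_sdiff S T h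
  calc
    syndrome h (S ∆ T) = syndrome h (S \ T) + syndrome h (T \ S) :=
      sum_union disjoint_sdiff_sdiff
    _ = syndrome h (S ∩ T) + syndrome h (S \ T) +
          (syndrome h (T ∩ S) + syndrome h (T \ S)) := by
      rw [inter_comm T S, add_comm (syndrome h (S ∩ T)), ZModModule.add_add_add_cancel]
    _ = syndrome h S + syndrome h T := by rw [sum_inter, sum_inter]

theorem two_lt_card_symmDiff [DecidableEq ι] (h_inj : h.Injective) (h_ne : ∀ i, h i ≠ 0)
    {S T : Finset ι} (hST : syndrome h S = syndrome h T) (ne : S ≠ T) : 2 < #(S ∆ T) := by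
  have zero : syndrome h (S ∆ T) = 0 := by
    rw [syndrome_symmDiff, hST, ZModModule.add_self]
  by_contra! le
  interval_cases hcard : #(S ∆ T)
  · exact ne (symmDiff_eq_bot.1 (card_eq_zero.1 hcard))
  · obtain ⟨i, hi⟩ := card_eq_one.1 hcard
    exact h_ne i (by simpa [syndrome, hi] using zero)
  · obtain ⟨i, j, hij, hS⟩ := card_eq_two.1 hcard
    rw [syndrome, hS, sum_pair hij, ← ZModModule.sub_eq_add, sub_eq_zero] at zero
    exact hij (h_inj zero)

theorem exists_subset_syndrome_eq [Fintype V] (h_inj : h.Injective) (h_ne : ∀ i, h i ≠ 0)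
    {U : Finset ι} (hU : Fintype.card V < 2 * (#U + 1)) (σ : V) :
    ∃ T ⊆ U, syndrome h T = σ := by
  classical
  let A : Finset V := insert 0 (U.image h)
  have card_A : #A = #U + 1 := by
    rw [card_insert_of_notMem (by simp [h_ne]), card_image_of_injective U h_inj]
  have attained : ∀ a ∈ A, ∃ T ⊆ U, syndrome h T = a := by
    intro a ha
    obtain rfl | ⟨i, hi, rfl⟩ : a = 0 ∨ ∃ i ∈ U, h i = a := by simpa [A] using ha
    · exact ⟨∅, empty_subset U, sum_empty⟩
    · exact ⟨{i}, singleton_subset_iff.2 hi, sum_singleton h i⟩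
  have overlap : (A ∩ A.image (σ + ·)).Nonempty := by
    refine inter_nonempty_of_card_lt_card_add_card (subset_univ _) (subset_univ _) ?_
    rw [card_univ, card_image_of_injective A (add_right_injective σ)]
    omega
  obtain ⟨a, ha⟩ := overlap
  obtain ⟨ha, b, hb, hab⟩ : a ∈ A ∧ ∃ b ∈ A, σ + b = a := by
    simpa only [mem_inter, mem_image] using ha
  obtain ⟨S, hSU, hS⟩ := attained a ha
  obtain ⟨T, hTU, hT⟩ := attained b hb
  refine ⟨S ∆ T, symmDiff_subset_union.trans (union_subset hSU hTU), ?_⟩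
  rw [syndrome_symmDiff, hS, hT, ← hab, add_assoc, ZModModule.add_self, add_zero]

theorem card_mul_card_filter_syndrome_eq [Fintype V] [DecidableEq V] (h_inj : h.Injective)
    (h_ne : ∀ i, h i ≠ 0) {U : Finset ι} (hU : Fintype.card V < 2 * (#U + 1)) (σ : V) :
    Fintype.card V * #{G ∈ U.powerset | syndrome h G = σ} = 2 ^ #U := by
  classical
  have fiber_le (σ τ : V) :
      #{G ∈ U.powerset | syndrome h G = σ} ≤ #{G ∈ U.powerset | syndrome h G = τ} := by
    obtain ⟨T, hTU, hT⟩ := exists_subset_syndrome_eq h_inj h_ne hU (σ + τ)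
    refine card_le_card_of_injOn (· ∆ T) (fun G hG => ?_) (symmDiff_left_injective T).injOn
    obtain ⟨hGU, rfl⟩ : G ⊆ U ∧ syndrome h G = σ := by simpa using hG
    have hGT : syndrome h (G ∆ T) = τ := by
      rw [syndrome_symmDiff, hT, ← add_assoc, ZModModule.add_self, zero_add]
    simpa [hGT] using symmDiff_subset_union.trans (union_subset hGU hTU)
  have fiber (τ : V) := (fiber_le τ σ).antisymm (fiber_le σ τ)
  calc
    Fintype.card V * #{G ∈ U.powerset | syndrome h G = σ}
      = ∑ τ : V, #{G ∈ U.powerset | syndrome h G = τ} := by simp [fiber]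
    _ = #U.powerset := (card_eq_sum_card_fiberwise fun _ _ => mem_coe.2 (mem_univ _)).symm
    _ = 2 ^ #U := card_powerset U

end Syndrome

section CodewordsAbove

variable {ι V : Type*} [Fintype ι] [DecidableEq ι] [AddCommGroup V] [DecidableEq V] {h : ι → V}

/-- The supports of the words of zero syndrome that equal `1` on all of `F`. -/
def codewordsAbove (h : ι → V) (F : Finset ι) : Finset (Finset ι) :=
  {S | F ⊆ S ∧ syndrome h S = 0}

theorem mem_codewordsAbove {F S : Finset ι} :
    S ∈ codewordsAbove h F ↔ F ⊆ S ∧ syndrome h S = 0 := by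
  simp [codewordsAbove]

theorem card_codewordsAbove (F : Finset ι) :
    #(codewordsAbove h F) = #{G ∈ Fᶜ.powerset | syndrome h G = -syndrome h F} := by
  refine card_bij' (fun S _ => S \ F) (fun G _ => G ∪ F) ?_ ?_ ?_ ?_
  · intro S hS
    obtain ⟨hFS, zero⟩ := mem_codewordsAbove.1 hS
    refine mem_filter.2 ⟨mem_powerset.2 ?_, ?_⟩
    · exact (sdiff_eq_inter_compl S F).trans_subset inter_subset_right
    · exact eq_neg_of_add_eq_zero_left ((sum_sdiff hFS).trans zero)
  · intro G hG
    obtain ⟨hGF, hG⟩ := mem_filter.1 hG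
    have disjoint := subset_compl_iff_disjoint_right.1 (mem_powerset.1 hGF)
    refine mem_codewordsAbove.2 ⟨subset_union_right, (sum_union disjoint).trans ?_⟩
    exact eq_neg_iff_add_eq_zero.1 hG
  · exact fun S hS => sdiff_union_of_subset (mem_codewordsAbove.1 hS).1
  · intro G hG
    have hGF := mem_powerset.1 (mem_filter.1 hG).1
    exact union_sdiff_cancel_right (subset_compl_iff_disjoint_right.1 hGF)

theorem sum_choose_card_sdiff_codewordsAbove (F : Finset ι) (r : ℕ) :
    ∑ S ∈ codewordsAbove h F, (#(S \ F)).choose r =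
      ∑ R ∈ powersetCard r Fᶜ, #(codewordsAbove h (F ∪ R)) := by
  calc
    ∑ S ∈ codewordsAbove h F, (#(S \ F)).choose r
      = ∑ S ∈ codewordsAbove h F, ∑ R ∈ powersetCard r (S \ F), 1 := by simp
    _ = ∑ R ∈ powersetCard r Fᶜ, ∑ S ∈ codewordsAbove h (F ∪ R), 1 := by
      refine sum_comm' fun S R => ?_
      simp only [mem_codewordsAbove, mem_powersetCard, union_subset_iff, subset_sdiff]
      rw [subset_compl_iff_disjoint_right]
      tauto
    _ = ∑ R ∈ powersetCard r Fᶜ, #(codewordsAbove h (F ∪ R)) := by simp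

theorem card_mul_sum_choose_card_sdiff [Module (ZMod 2) V] [Fintype V] (h_inj : h.Injective)
    (h_ne : ∀ i, h i ≠ 0) {F : Finset ι} {r : ℕ} (hF : Fintype.card V < 2 * (#Fᶜ - r + 1)) :
    Fintype.card V * ∑ S ∈ codewordsAbove h F, (#(S \ F)).choose r =
      (#Fᶜ).choose r * 2 ^ (#Fᶜ - r) := by
  have card_compl_union : ∀ R ∈ powersetCard r Fᶜ, #(F ∪ R)ᶜ = #Fᶜ - r := by
    intro R hR
    obtain ⟨hRF, rfl⟩ := mem_powersetCard.1 hR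
    rw [compl_union, ← sdiff_eq_inter_compl, card_sdiff_of_subset hRF]
  rw [sum_choose_card_sdiff_codewordsAbove, mul_sum, ← card_powersetCard, ← smul_eq_mul,
    ← sum_const]
  refine sum_congr rfl fun R hR => ?_
  rw [← card_compl_union R hR] at hF ⊢
  rw [card_codewordsAbove, card_mul_card_filter_syndrome_eq h_inj h_ne hF]

end CodewordsAbove

-- The cubic approximates the one that interpolates at `3`, `4`, `7` and `8`, the integers around
-- the two nodes `(11 ± √11) / 2` of Gauss quadrature for the binomial distribution `B(11, 1/2)`.
theorem cubic_le_inv_choose {j : ℕ} (hj : j ≤ 11) :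
    (64 - 22 * j + 6 * j.choose 2 - j.choose 3 : ℚ) / 560 ≤ ((j + 4).choose 4 : ℚ)⁻¹ := by
  interval_cases j <;> norm_num [Nat.choose]

theorem one_le_sum_inv_choose {ι V : Type*} [Fintype ι] [DecidableEq ι] [AddCommGroup V]
    [Module (ZMod 2) V] [Fintype V] [DecidableEq V] {h : ι → V} (h_inj : h.Injective)
    (h_ne : ∀ i, h i ≠ 0) (hι : Fintype.card ι = 15) (hV : Fintype.card V = 16)
    {F : Finset ι} (hF : #F = 4) :
    1 ≤ ∑ S ∈ codewordsAbove h F, ((#S).choose 4 : ℚ)⁻¹ := by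
  have card_compl_F : #Fᶜ = 11 := by rw [card_compl, hι, hF]
  have moment (r : ℕ) (hr : r ≤ 3) :
      16 * ∑ S ∈ codewordsAbove h F, ((#(S \ F)).choose r : ℚ) =
        Nat.choose 11 r * 2 ^ (11 - r) := by
    have moment_nat := card_mul_sum_choose_card_sdiff h_inj h_ne (F := F) (r := r) (by omega)
    rw [hV, card_compl_F] at moment_nat
    exact_mod_cast moment_nat
  have cubic_le : ∀ S ∈ codewordsAbove h F,
      (64 - 22 * #(S \ F) + 6 * (#(S \ F)).choose 2 - (#(S \ F)).choose 3 : ℚ) / 560 ≤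
        ((#S).choose 4 : ℚ)⁻¹ := by
    intro S hS
    have card_S : #S = #(S \ F) + 4 := by
      rw [← hF, card_sdiff_add_card_eq_card (mem_codewordsAbove.1 hS).1]
    rw [card_S]
    have sub : S \ F ⊆ Fᶜ := (sdiff_eq_inter_compl S F).trans_subset inter_subset_right
    exact cubic_le_inv_choose (card_compl_F ▸ card_le_card sub)
  refine le_trans ?_ (sum_le_sum cubic_le)
  have moment_zero := moment 0 (by norm_num)
  have moment_one := moment 1 (by norm_num)
  have moment_two := moment 2 (by norm_num)
  have moment_three := moment 3 (by norm_num)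
  norm_num [Nat.choose] at moment_zero moment_one moment_two moment_three
  simp only [← sum_div, sum_add_distrib, sum_sub_distrib, ← mul_sum, sum_const, nsmul_eq_mul]
  linarith

section SeparatedExtension

variable {ι : Type*} [DecidableEq ι]

/-- `c` extends every `t`-set `F` to a set `c F ⊇ F` in such a way that distinct `t`-sets get
extensions at Hamming distance at least three. -/
structure IsSeparatedExtension (t : ℕ) (c : Finset ι → Finset ι) : Prop where
  subset : ∀ {F}, #F = t → F ⊆ c F
  two_lt_card_symmDiff : ∀ {F F'}, #F = t → #F' = t → F ≠ F' → 2 < #(c F ∆ c F')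

theorem exists_isSeparatedExtension_four {V : Type*} [Fintype ι] [AddCommGroup V]
    [Module (ZMod 2) V] [Fintype V] {h : ι → V} (h_inj : h.Injective) (h_ne : ∀ i, h i ≠ 0)
    (hι : Fintype.card ι = 15) (hV : Fintype.card V = 16) :
    ∃ c : Finset ι → Finset ι, IsSeparatedExtension 4 c := by
  classical
  have col (S : Finset ι) : ∑ F ∈ powersetCard 4 univ with S ∈ codewordsAbove h F,
      ((#S).choose 4 : ℚ)⁻¹ ≤ 1 := by
    have sub : {F ∈ powersetCard 4 (univ : Finset ι) | S ∈ codewordsAbove h F} ⊆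
        powersetCard 4 S := by
      simp +contextual [subset_iff, mem_codewordsAbove]
    calc
      _ ≤ ∑ _F ∈ powersetCard 4 S, ((#S).choose 4 : ℚ)⁻¹ :=
        sum_le_sum_of_subset_of_nonneg sub fun _ _ _ => by positivity
      _ = (#S).choose 4 * ((#S).choose 4 : ℚ)⁻¹ := by simp
      _ ≤ 1 := mul_inv_le_one
  obtain ⟨c, c_inj, c_mem⟩ := exists_injOn_of_fractional_matching
    (s := powersetCard 4 univ) (r := codewordsAbove h) (w := fun _ S => ((#S).choose 4 : ℚ)⁻¹)
    (fun _ _ _ _ => by positivity)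
    (fun _ hF => one_le_sum_inv_choose h_inj h_ne hι hV (mem_powersetCard_univ.1 hF)) col
  simp only [mem_powersetCard_univ, mem_codewordsAbove] at c_mem
  refine ⟨c, fun hF => (c_mem _ hF).1, fun {F F'} hF hF' ne => ?_⟩
  refine two_lt_card_symmDiff h_inj h_ne ((c_mem F hF).2.trans (c_mem F' hF').2.symm) ?_
  exact c_inj.ne (by simpa using hF) (by simpa using hF') ne

namespace IsSeparatedExtension

variable {t : ℕ} {c : Finset ι → Finset ι} {F F' : Finset ι}

theorem eq_of_card_symmDiff_le (hc : IsSeparatedExtension t c) (hF : #F = t) (hF' : #F' = t)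
    (le : #(c F ∆ c F') ≤ 2) : F = F' := by
  by_contra ne
  exact le.not_gt (hc.two_lt_card_symmDiff hF hF' ne)

theorem symmDiff_singleton_ne (hc : IsSeparatedExtension t c) (hF : #F = t) (hF' : #F' = t)
    (p : ι) : c F ∆ {p} ≠ c F' := by
  intro eq
  have diff : c F ∆ c F' = {p} := by rw [← eq, symmDiff_symmDiff_cancel_left]
  obtain rfl := hc.eq_of_card_symmDiff_le hF hF' (by simp [diff])
  simp at diff

theorem symmDiff_singleton_inj (hc : IsSeparatedExtension t c) (hF : #F = t) (hF' : #F' = t)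
    {p p' : ι} (eq : c F ∆ {p} = c F' ∆ {p'}) : F = F' ∧ p = p' := by
  have diff : c F ∆ c F' = {p} ∆ {p'} := by
    refine symmDiff_eq_bot.1 ?_
    rw [symmDiff_symmDiff_symmDiff_comm, eq, symmDiff_self]
  obtain rfl := hc.eq_of_card_symmDiff_le hF hF' <| diff ▸
    (card_le_card symmDiff_subset_union).trans (card_union_le _ _)
  exact ⟨rfl, singleton_injective (symmDiff_right_injective _ eq)⟩

end IsSeparatedExtension

end SeparatedExtension

section Bob

variable {γ ι : Type*} [Fintype γ] [Fintype ι] [DecidableEq ι]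

open Classical in
/-- Bob's answer to the string with support `y g` in each block `g`. A block that is not flipped
has received Eve's bit, and every position of it outside `F` may have been the last one;
otherwise decoding each block yields its flipped position. -/
noncomputable def bobAnswer (t : ℕ) (c : Finset ι → Finset ι) (y : γ → Finset ι) :
    Finset (γ × ι) :=
  if ∃ g F, #F = t ∧ y g = c F then univ.filter fun z => ∃ F, #F = t ∧ y z.1 = c F ∧ z.2 ∉ F
  else univ.filter fun z => ∃ F, #F = t ∧ y z.1 = c F ∆ {z.2}

variable {t : ℕ} {c : Finset ι → Finset ι} {F : γ → Finset ι} {p : γ → ι} {y : γ → Finset ι}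

theorem bobAnswer_of_forall [DecidableEq γ] (hc : IsSeparatedExtension t c) (hF : ∀ g, #(F g) = t)
    (hy : ∀ g, y g = c (F g) ∆ {p g}) :
    bobAnswer t c y = univ.image fun g => (g, p g) := by
  have flipped : ¬ ∃ g F, #F = t ∧ y g = c F := by
    rintro ⟨g, F', hF', eq⟩
    exact hc.symmDiff_singleton_ne (hF g) hF' (p g) ((hy g).symm.trans eq)
  ext ⟨g, q⟩
  rw [bobAnswer, if_neg flipped]
  simp only [mem_filter, mem_univ, true_and, mem_image, Prod.mk.injEq, exists_eq_left]
  constructor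
  · rintro ⟨F', hF', eq⟩
    exact (hc.symmDiff_singleton_inj (hF g) hF' ((hy g).symm.trans eq)).2
  · rintro rfl
    exact ⟨F g, hF g, hy g⟩

theorem bobAnswer_of_eq (hc : IsSeparatedExtension t c) (hF : ∀ g, #(F g) = t) {g₀ : γ}
    (hy : ∀ g ≠ g₀, y g = c (F g) ∆ {p g}) (hg₀ : y g₀ = c (F g₀)) :
    bobAnswer t c y = {g₀} ×ˢ (F g₀)ᶜ := by
  ext ⟨g, q⟩
  rw [bobAnswer, if_pos ⟨g₀, F g₀, hF g₀, hg₀⟩]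
  simp only [mem_filter, mem_univ, true_and, mem_product, mem_singleton, mem_compl]
  constructor
  · rintro ⟨F', hF', eq, hq⟩
    obtain rfl : g = g₀ := by
      by_contra ne
      exact hc.symmDiff_singleton_ne (hF g) hF' (p g) ((hy g ne).symm.trans eq)
    obtain rfl : F g = F' :=
      hc.eq_of_card_symmDiff_le (hF g) hF' (by simp [← hg₀, eq])
    exact ⟨rfl, hq⟩
  · rintro ⟨rfl, hq⟩
    exact ⟨F g, hF g, hg₀, hq⟩

theorem mem_bobAnswer_and_card_le (hc : IsSeparatedExtension t c) (hF : ∀ g, #(F g) = t)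
    {g₀ : γ} (hp : p g₀ ∉ F g₀)
    (hy : ∀ g q, (g, q) ≠ (g₀, p g₀) → (q ∈ y g ↔ q ∈ c (F g) ∆ {p g})) :
    (g₀, p g₀) ∈ bobAnswer t c y ∧
      #(bobAnswer t c y) ≤ max (Fintype.card γ) (Fintype.card ι - t) := by
  classical
  have hy_ne : ∀ g ≠ g₀, y g = c (F g) ∆ {p g} := fun g ne =>
    Finset.ext fun q => hy g q fun eq => ne (congrArg Prod.fst eq)
  have hy_g₀ : ∀ q ≠ p g₀, (q ∈ y g₀ ↔ q ∈ c (F g₀)) := fun q ne => by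
    rw [hy g₀ q (by simpa using ne)]
    simp [mem_symmDiff, ne]
  by_cases bit : p g₀ ∈ y g₀ ↔ p g₀ ∈ c (F g₀)
  · have eq : y g₀ = c (F g₀) := by grind
    rw [bobAnswer_of_eq hc hF hy_ne eq]
    refine ⟨by simpa using hp, ?_⟩
    rw [card_product, card_singleton, one_mul, card_compl, hF]
    exact le_max_right _ _
  · have eq : ∀ g, y g = c (F g) ∆ {p g} := fun g => by
      obtain rfl | ne := eq_or_ne g g₀
      · grind [mem_symmDiff]
      · exact hy_ne g ne
    rw [bobAnswer_of_forall hc hF eq]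
    exact ⟨mem_image_of_mem _ (mem_univ g₀), card_image_le.trans (le_max_left _ _)⟩

end Bob

section Alice

variable {γ ι : Type*} [DecidableEq γ]

/-- The positions in block `g` of a list of indices, in order of appearance. -/
def blockList (g : γ) (L : List (γ × ι)) : List ι :=
  (L.filter (·.1 = g)).map Prod.snd

theorem nodup_blockList {L : List (γ × ι)} (hL : L.Nodup) (g : γ) : (blockList g L).Nodup := by
  refine (hL.filter _).map_on ?_
  simp +contextual [Prod.ext_iff]

theorem mem_blockList {L : List (γ × ι)} {g : γ} {q : ι} : q ∈ blockList g L ↔ (g, q) ∈ L := by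
  simp [blockList]

theorem blockList_append_singleton (L : List (γ × ι)) (g : γ) (q : ι) :
    blockList g (L ++ [(g, q)]) = blockList g L ++ [q] := by
  simp [blockList]

theorem blockList_prefix_blockList {L L' : List (γ × ι)} (hL : L <+: L') (g : γ) :
    blockList g L <+: blockList g L' :=
  (hL.filter _).map _

theorem getLast_notMem_take {t : ℕ} {l : List ι} (nodup : l.Nodup) (ne_nil : l ≠ [])
    (ht : t < l.length) : l.getLast ne_nil ∉ l.take t := by
  rw [List.getLast_eq_getElem, List.mem_take_iff_getElem]
  rintro ⟨i, hi, eq⟩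
  have index_eq := nodup.getElem_inj_iff.1 eq
  omega

theorem length_blockList [Fintype ι] {L : List (γ × ι)} (nodup : L.Nodup) (mem : ∀ z, z ∈ L)
    (g : γ) : (blockList g L).length = Fintype.card ι := by
  classical
  rw [← List.toFinset_card_of_nodup (nodup_blockList nodup g), card_eq_iff_eq_univ]
  ext q
  simp [mem_blockList, mem]

theorem card_toFinset_take [DecidableEq ι] {t : ℕ} {l : List ι} (nodup : l.Nodup)
    (ht : t ≤ l.length) : #(l.take t).toFinset = t := by
  rw [List.toFinset_card_of_nodup (nodup.sublist (List.take_sublist t l)), List.length_take,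
    min_eq_left ht]

variable [Fintype ι] [DecidableEq ι] {t : ℕ} {c : Finset ι → Finset ι}

/-- Alice's bit at position `q` of a block in which the positions `P` have been revealed before:
she answers `true` on the first `t` positions, forming a set `F`, and then follows `c F`, except
that she flips the last position of the block. -/
def blockBit (t : ℕ) (c : Finset ι → Finset ι) (P : List ι) (q : ι) : Bool :=
  P.length < t || (q ∈ c (P.take t).toFinset) ^^ (P.length + 1 = Fintype.card ι)

theorem blockBit_eq_true_iff (hc : IsSeparatedExtension t c) {ℓ : List ι} (nodup : ℓ.Nodup)
    (length : ℓ.length = Fintype.card ι) (ht : t < Fintype.card ι) {P : List ι} {q : ι}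
    (hP : P ++ [q] <+: ℓ) (ne_nil : ℓ ≠ []) :
    blockBit t c P q = true ↔ q ∈ c (ℓ.take t).toFinset ∆ {ℓ.getLast ne_nil} := by
  have lt_length : P.length < ℓ.length := by simpa using hP.length_le
  have hq : q = ℓ[P.length] := by simpa using hP.getElem (i := P.length) (by simp)
  have q_eq_last : q = ℓ.getLast ne_nil ↔ P.length + 1 = Fintype.card ι := by
    rw [hq, List.getLast_eq_getElem, nodup.getElem_inj_iff]
    omega
  rw [mem_symmDiff, mem_singleton, q_eq_last]
  obtain hPt | hPt := lt_or_ge P.length t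
  · have q_mem : q ∈ c (ℓ.take t).toFinset := by
      refine hc.subset (card_toFinset_take nodup (length ▸ ht.le)) (List.mem_toFinset.2 ?_)
      exact hq ▸ List.mem_take_iff_getElem.2 ⟨P.length, by omega, rfl⟩
    have not_last : P.length + 1 ≠ Fintype.card ι := by omega
    simp [blockBit, hPt, q_mem, not_last]
  · have take_eq : P.take t = ℓ.take t := by
      have hPℓ : P <+: ℓ := (List.prefix_append P [q]).trans hP
      rw [List.prefix_iff_eq_take.1 hPℓ, List.take_take, min_eq_left hPt]
    simp [blockBit, hPt.not_gt, take_eq]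
    tauto

/-- Alice's strategy on indices `α` arranged by `e` in blocks: she plays `blockBit` in each block.
On the empty list, which does not occur in the game, the value is arbitrary. -/
def aliceBit {α : Type*} (e : α ≃ γ × ι) (t : ℕ) (c : Finset ι → Finset ι) (L : List α) : Bool :=
  L.getLast?.elim true fun j => blockBit t c (blockList (e j).1 (L.dropLast.map e)) (e j).2

theorem exists_aliceBit_eq_true_iff {α : Type*} (e : α ≃ γ × ι) (hc : IsSeparatedExtension t c)
    (ht : t < Fintype.card ι) {ℓ M : List α} {j₀ : α} (nodup : ℓ.Nodup) (mem : ∀ j, j ∈ ℓ)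
    (hℓ : ℓ = M ++ [j₀]) :
    ∃ (F : γ → Finset ι) (p : γ → ι), (∀ g, #(F g) = t ∧ p g ∉ F g) ∧ p (e j₀).1 = (e j₀).2 ∧
      ∀ {L j}, L ++ [j] <+: ℓ →
        (aliceBit e t c (L ++ [j]) = true ↔ (e j).2 ∈ c (F (e j).1) ∆ {p (e j).1}) := by
  have nodup_block (g : γ) := nodup_blockList (nodup.map e.injective) g
  have length (g : γ) : (blockList g (ℓ.map e)).length = Fintype.card ι :=
    length_blockList (nodup.map e.injective)
      (fun z => List.mem_map.2 ⟨e.symm z, mem _, e.apply_symm_apply z⟩) g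
  have ne_nil (g : γ) : blockList g (ℓ.map e) ≠ [] :=
    List.ne_nil_of_length_pos (by rw [length]; omega)
  refine ⟨fun g => ((blockList g (ℓ.map e)).take t).toFinset,
    fun g => (blockList g (ℓ.map e)).getLast (ne_nil g), fun g => ⟨?_, ?_⟩, ?_, ?_⟩
  · exact card_toFinset_take (nodup_block g) (length g ▸ ht.le)
  · rw [List.mem_toFinset]
    exact getLast_notMem_take (nodup_block g) (ne_nil g) (by rwa [length])
  · have block_last := blockList_append_singleton (M.map e) (e j₀).1 (e j₀).2
    simp [hℓ, block_last]
  · intro L j hL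
    have hP : blockList (e j).1 (L.map e) ++ [(e j).2] <+: blockList (e j).1 (ℓ.map e) := by
      rw [← blockList_append_singleton]
      exact blockList_prefix_blockList (by simpa using hL.map e) _
    rw [← blockBit_eq_true_iff hc (nodup_block _) (length _) ht hP (ne_nil _)]
    simp [aliceBit]

end Alice

theorem exists_prefix_gksString_eq {n : ℕ} (a : List (Fin (n + 1)) → Bool)
    (π : Equiv.Perm (Fin (n + 1))) (b : Bool) {j : Fin (n + 1)} (hj : j ≠ π (Fin.last n)) :
    ∃ L, L ++ [j] <+: (List.finRange (n + 1)).map π ∧ gksString (n + 1) a π b j = a (L ++ [j]) := by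
  have take_succ : ((List.finRange (n + 1)).take (π.symm j + 1)).map π =
      ((List.finRange (n + 1)).take (π.symm j)).map π ++ [j] := by
    rw [List.take_succ_eq_append_getElem (by simpa using (π.symm j).is_lt)]
    simp
  refine ⟨((List.finRange (n + 1)).take (π.symm j)).map π, ?_, ?_⟩
  · exact take_succ ▸ (List.take_prefix _ _).map π
  · have not_last : (π.symm j : ℕ) ≠ n := fun eq =>
      hj (π.symm_apply_eq.1 (Fin.ext eq))
    rw [gksString, if_neg (by simpa using not_last), take_succ]

/-- The support in block `g` of the string `x`, whose indices are arranged by `e` in blocks. -/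
def blockSupport {α γ ι : Type*} [Fintype ι] (e : α ≃ γ × ι) (x : α → Bool) (g : γ) : Finset ι :=
  {q | x (e.symm (g, q)) = true}

theorem mem_blockSupport {α γ ι : Type*} [Fintype ι] {e : α ≃ γ × ι} {x : α → Bool} {g : γ}
    {q : ι} : q ∈ blockSupport e x g ↔ x (e.symm (g, q)) = true := by
  simp [blockSupport]

theorem hasGKSStrategy_of_isSeparatedExtension {γ ι : Type*} [Fintype γ] [Fintype ι]
    [DecidableEq ι] {n t : ℕ} (e : Fin (n + 1) ≃ γ × ι) {c : Finset ι → Finset ι}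
    (hc : IsSeparatedExtension t c) (ht : t < Fintype.card ι) :
    HasGKSStrategy (max (Fintype.card γ) (Fintype.card ι - t)) (n + 1) := by
  classical
  refine ⟨aliceBit e t c, fun x => (bobAnswer t c (blockSupport e x)).map e.symm.toEmbedding,
    fun π b => ?_⟩
  let ℓ : List (Fin (n + 1)) := (List.finRange (n + 1)).map π
  have nodup : ℓ.Nodup := (List.nodup_finRange _).map π.injective
  have mem (j : Fin (n + 1)) : j ∈ ℓ := by simp [ℓ, ← Equiv.eq_symm_apply]
  have last : ℓ = (List.finRange n).map (π ∘ Fin.castSucc) ++ [π (Fin.last n)] := by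
    simp [ℓ, List.finRange_succ_last]
  obtain ⟨F, p, hFp, p_last, alice⟩ := exists_aliceBit_eq_true_iff e hc ht nodup mem last
  have support (g : γ) (q : ι) (ne : (g, q) ≠ e (π (Fin.last n))) :
      q ∈ blockSupport e (gksString (n + 1) (aliceBit e t c) π b) g ↔ q ∈ c (F g) ∆ {p g} := by
    obtain ⟨L, hL, bit⟩ := exists_prefix_gksString_eq (aliceBit e t c) π b
      (mt e.symm_apply_eq.1 ne)
    simpa only [mem_blockSupport, bit, e.apply_symm_apply] using alice hL
  have last_pos : e (π (Fin.last n)) = ((e (π (Fin.last n))).1, p (e (π (Fin.last n))).1) :=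
    Prod.ext rfl p_last.symm
  obtain ⟨mem_bob, card_bob⟩ := mem_bobAnswer_and_card_le hc (fun g => (hFp g).1) (hFp _).2
    fun g q ne => support g q (last_pos ▸ ne)
  refine ⟨fun i hi => ?_, (card_map _).trans_le card_bob⟩
  obtain rfl : i = Fin.last n := Fin.ext hi
  rw [mem_map_equiv, Equiv.symm_symm, last_pos]
  exact mem_bob

end GKS

/-- There exists an `(11, 165)` strategy for the GKS game; equivalently, the
cost of the GKS game on `165` variables satisfies `C(165) ≤ 11`. -/
theorem gks_strategy_11_165 :
    HasGKSStrategy 11 165 ∧ gksCost 165 ≤ 11 := by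
  have card_columns : Fintype.card {v : Fin 4 → ZMod 2 // v ≠ 0} = 15 := by
    simp [Fintype.card_subtype_compl]
  obtain ⟨c, hc⟩ := GKS.exists_isSeparatedExtension_four
    (h := Subtype.val (p := fun v : Fin 4 → ZMod 2 => v ≠ 0)) Subtype.val_injective Subtype.prop
    card_columns (by simp)
  let e : Fin (164 + 1) ≃ Fin 11 × {v : Fin 4 → ZMod 2 // v ≠ 0} :=
    Fintype.equivOfCardEq (by simp [card_columns])
  have strategy : HasGKSStrategy 11 165 := by
    simpa [card_columns] using
      GKS.hasGKSStrategy_of_isSeparatedExtension e hc (by simp [card_columns])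
  exact ⟨strategy, Nat.sInf_le strategy⟩
end

section
/- If there exists a (k, n) strategy for the GKS game and there exists a (k', n') strategy for the GKS game, then there exists a (k·k', n·n') strategy for the GKS game. -/
/-!
View the `n * n'` indices as `n` blocks of size `n'`. Inside each block Alice follows the second
strategy, except that the bit of the last index of a block to be revealed is used to make the
parity of the block equal to the bit which the first strategy would write for that block, the
blocks being ordered by the time of their completion. The parities then form a play of the first
strategy and every block is a play of the second one, each of the two plays ending with the
coordinate of Eve's last index. Bob therefore guesses at most `k` blocks from the parities and at
most `k'` indices in each of them.
-/

namespace GKS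

section Strategy

variable {γ δ : Type*}

/-- A play of Alice's strategy `a` against the order `l`, over an arbitrary index type: `x` agrees
with `a` except possibly at the last entry of `l`, where Eve chooses the bit. -/
def IsPlay (a : List γ → Bool) (l : List γ) (x : γ → Bool) : Prop :=
  ∀ p j s, l = p ++ j :: s → s ≠ [] → x j = a (p ++ [j])

/-- Strategies of cost `k` for the GKS game with index type `γ`, an order in which Eve reveals the
indices being a duplicate-free list of all of them. -/
def IsStrategyOn (k : ℕ) (a : List γ → Bool) (B : (γ → Bool) → Finset γ) : Prop :=
  ∀ l : List γ, l.Nodup ∧ (∀ j, j ∈ l) →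
    ∀ x, IsPlay a l x → (∀ j, [j] <:+ l → j ∈ B x) ∧ (B x).card ≤ k

/-- Existence of a strategy of cost `k` for the GKS game with index type `γ`. -/
def HasStrategyOn (k : ℕ) (γ : Type*) : Prop :=
  ∃ (a : List γ → Bool) (B : (γ → Bool) → Finset γ), IsStrategyOn k a B

theorem isPlay_iff_getElem {a : List γ → Bool} {l : List γ} {x : γ → Bool} :
    IsPlay a l x ↔ ∀ m (hm : m + 1 < l.length), x l[m] = a (l.take (m + 1)) := by
  constructor
  · intro h m hm
    rw [← List.take_append_getElem (by lia)]
    exact h _ _ (l.drop (m + 1)) (by simp) (by simpa using hm)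
  · rintro h p j s rfl hs
    have hlength : p.length + 1 < (p ++ j :: s).length := by
      simpa [List.length_pos_iff] using hs
    simpa [List.take_length_add_append] using h p.length hlength

theorem IsPlay.map_equiv (e : γ ≃ δ) {a : List γ → Bool} {l : List δ} {x : δ → Bool}
    (h : IsPlay (fun m => a (m.map e.symm)) l x) : IsPlay a (l.map e.symm) (x ∘ e) := by
  rw [isPlay_iff_getElem] at h ⊢
  simpa using h

theorem HasStrategyOn.congr {k : ℕ} (e : γ ≃ δ) (h : HasStrategyOn k γ) : HasStrategyOn k δ := by
  obtain ⟨a, B, hB⟩ := h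
  refine ⟨fun l => a (l.map e.symm), fun x => (B (x ∘ e)).map e.toEmbedding, ?_⟩
  rintro l ⟨hnodup, hmem⟩ x hx
  have hl : (l.map e.symm).Nodup ∧ ∀ j, j ∈ l.map e.symm :=
    ⟨hnodup.map e.symm.injective, fun j => List.mem_map.2 ⟨e j, hmem _, e.symm_apply_apply j⟩⟩
  obtain ⟨hlast, hcard⟩ := hB _ hl _ (hx.map_equiv e)
  refine ⟨fun j hj => ?_, by rwa [Finset.card_map]⟩
  exact Finset.mem_map_equiv.2 (hlast _ (hj.map e.symm))

end Strategy

section Fin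

variable {n : ℕ}

theorem exists_map_finRange_eq_iff {l : List (Fin n)} :
    (∃ π : Equiv.Perm (Fin n), (List.finRange n).map π = l) ↔ l.Nodup ∧ ∀ j, j ∈ l := by
  constructor
  · rintro ⟨π, rfl⟩
    exact ⟨(List.nodup_finRange n).map π.injective, fun j => by simpa using π.surjective j⟩
  · rintro ⟨hnodup, hmem⟩
    let e : Fin l.length ≃ Fin n := hnodup.getEquivOfForallMemList l hmem
    have hlength : l.length = n := Fin.equiv_iff_eq.1 ⟨e⟩
    refine ⟨(finCongr hlength.symm).trans e, List.ext_getElem (by simp [hlength]) ?_⟩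
    simp [e]

theorem isPlay_map_finRange_iff {a : List (Fin n) → Bool} {π : Equiv.Perm (Fin n)}
    {x : Fin n → Bool} :
    IsPlay a ((List.finRange n).map π) x ↔ ∃ b, x = gksString n a π b := by
  rw [isPlay_iff_getElem]
  constructor
  · intro h
    rcases n with _ | n
    · exact ⟨true, Subsingleton.elim _ _⟩
    refine ⟨x (π (Fin.last n)), funext fun j => ?_⟩
    obtain ⟨i, rfl⟩ := π.surjective j
    rw [gksString, Equiv.symm_apply_apply]
    split_ifs with hi
    · rw [show i = Fin.last n from Fin.ext hi]
    · have hlt : (i : ℕ) + 1 < n + 1 := by lia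
      simpa [List.map_take] using h i (by simpa using hlt)
  · rintro ⟨b, rfl⟩ m hm
    have hne : m ≠ n - 1 := by
      simp only [List.length_map, List.length_finRange] at hm
      lia
    simp [gksString, hne, List.map_take]

theorem singleton_suffix_map_finRange_iff {π : Equiv.Perm (Fin n)} {j : Fin n} :
    [j] <:+ (List.finRange n).map π ↔ ∃ i : Fin n, (i : ℕ) = n - 1 ∧ π i = j := by
  rcases n with _ | n
  · exact j.elim0
  · rw [List.finRange_succ_last, List.map_append, List.map_singleton,
      List.singleton_suffix_append_singleton_iff]
    exact ⟨fun h => ⟨Fin.last n, rfl, h.symm⟩,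
      fun ⟨i, hi, hij⟩ => by rw [← hij, show i = Fin.last n from Fin.ext hi]⟩

theorem hasGKSStrategy_iff_hasStrategyOn {k : ℕ} :
    HasGKSStrategy k n ↔ HasStrategyOn k (Fin n) := by
  simp only [HasGKSStrategy, IsGKSStrategy, HasStrategyOn, IsStrategyOn,
    ← exists_map_finRange_eq_iff, forall_exists_index, forall_apply_eq_imp_iff,
    isPlay_map_finRange_iff, forall_eq_apply_imp_iff, singleton_suffix_map_finRange_iff, and_imp,
    forall_apply_eq_imp_iff₂]

end Fin

section Transcript

variable {γ : Type*} [DecidableEq γ]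

/-- The string that the strategy `a` writes against the order `l` if it also answers the last
index. -/
def transcript (a : List γ → Bool) (l : List γ) (j : γ) : Bool :=
  a (l.take (l.idxOf j + 1))

theorem transcript_append_cons {a : List γ → Bool} {p s : List γ} {j : γ} (hj : j ∉ p) :
    transcript a (p ++ j :: s) j = a (p ++ [j]) := by
  simp [transcript, List.idxOf_append_of_notMem hj, List.take_length_add_append]

theorem IsPlay.update_eq_update_transcript {a : List γ → Bool} {p : List γ} {j : γ} {x : γ → Bool}
    (h : IsPlay a (p ++ [j]) x) (hmem : ∀ i, i ∈ p ++ [j]) (b : Bool) :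
    Function.update x j b = Function.update (transcript a (p ++ [j])) j b := by
  funext i
  rcases eq_or_ne i j with rfl | hij
  · simp
  obtain ⟨u, v, huv, hiu⟩ := List.eq_append_cons_of_mem (hmem i)
  have hv : v ≠ [] := by
    rintro rfl
    exact hij (List.singleton_inj.1 (List.append_inj_right' huv rfl)).symm
  rw [Function.update_of_ne hij, Function.update_of_ne hij, h u i v huv hv, huv,
    transcript_append_cons hiu]

end Transcript

section Parity

variable {β : Type*} [Fintype β]

/-- The parity of a string: whether the number of its `true` bits is odd. -/
def parity (f : β → Bool) : Bool :=
  (∑ j, (f j).toNat).bodd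

theorem parity_eq_xor_parity_update [DecidableEq β] (f : β → Bool) (j : β) :
    parity f = (f j ^^ parity (Function.update f j false)) := by
  have hcongr : ∑ i ∈ Finset.univ.erase j, (Function.update f j false i).toNat =
      ∑ i ∈ Finset.univ.erase j, (f i).toNat :=
    Finset.sum_congr rfl fun i hi => by rw [Function.update_of_ne (Finset.ne_of_mem_erase hi)]
  have hbodd (b : Bool) : b.toNat.bodd = b := by cases b <;> rfl
  simp only [parity, ← Finset.add_sum_erase _ _ (Finset.mem_univ j), Nat.bodd_add, hcongr, hbodd,
    Function.update_self, Bool.false_xor]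

theorem IsPlay.parity_eq [DecidableEq β] {a : List β → Bool} {p : List β} {j : β} {x : β → Bool}
    {b : Bool} (h : IsPlay a (p ++ [j]) x) (hmem : ∀ i, i ∈ p ++ [j])
    (hj : x j = (b ^^ parity (Function.update (transcript a (p ++ [j])) j false))) :
    parity x = b := by
  rw [parity_eq_xor_parity_update x j, h.update_eq_update_transcript hmem, hj, Bool.xor_assoc,
    Bool.xor_self, Bool.xor_false]

end Parity

section Dedup

variable {γ : Type*} [DecidableEq γ]

theorem singleton_suffix_dedup {l : List γ} {i : γ} (h : [i] <:+ l) : [i] <:+ l.dedup := by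
  obtain ⟨p, rfl⟩ := h
  rw [List.dedup_append]
  exact List.suffix_union_right p [i]

theorem exists_of_dedup_eq_append_cons {l P S : List γ} {i : γ} (h : l.dedup = P ++ i :: S) :
    ∃ p s, l = p ++ i :: s ∧ i ∉ s ∧ s.dedup = S ∧
      (p ++ [i]).dedup.filter (· ∉ s) = P ++ [i] := by
  induction l generalizing P with
  | nil => simp at h
  | cons c l ih =>
    by_cases hc : c ∈ l
    · rw [List.dedup_cons_of_mem hc] at h
      obtain ⟨p, s, rfl, his, hS, hP⟩ := ih h
      refine ⟨c :: p, s, rfl, his, hS, ?_⟩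
      rw [List.cons_append, ← hP]
      by_cases hcp : c ∈ p ++ [i]
      · rw [List.dedup_cons_of_mem hcp]
      · have hcs : c ∈ s := by grind
        rw [List.dedup_cons_of_notMem hcp, List.filter_cons_of_neg (by simpa using hcs)]
    · rw [List.dedup_cons_of_notMem hc] at h
      rcases List.cons_eq_append_iff.1 h with ⟨rfl, hcons⟩ | ⟨P, rfl, hdedup⟩
      · obtain ⟨rfl, rfl⟩ := List.cons.inj hcons
        exact ⟨[], l, rfl, hc, rfl, by simpa using hc⟩
      · obtain ⟨p, s, rfl, his, hS, hP⟩ := ih hdedup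
        have hcp : c ∉ p ++ [i] := by grind
        have hcs : c ∉ s := by grind
        refine ⟨c :: p, s, rfl, his, hS, ?_⟩
        rw [List.cons_append, List.dedup_cons_of_notMem hcp,
          List.filter_cons_of_pos (by simpa using hcs), hP, List.cons_append]

end Dedup

section Composition

variable {α β : Type*}

theorem mem_of_notMem_map_fst {q s : List (α × β)} {i : α} (hmem : ∀ g, g ∈ q ++ s)
    (hi : i ∉ s.map Prod.fst) (j : β) : (i, j) ∈ q :=
  (List.mem_append.1 (hmem (i, j))).resolve_right fun hj =>
    hi (List.mem_map_of_mem (f := Prod.fst) hj)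

variable [DecidableEq α]

/-- The order in which the indices of the block `{i} × β` are revealed by `l`. -/
def block (i : α) (l : List (α × β)) : List β :=
  l.filterMap fun q => if q.1 = i then some q.2 else none

theorem mem_block {i : α} {j : β} {l : List (α × β)} : j ∈ block i l ↔ (i, j) ∈ l := by
  simp [block]

theorem block_append (i : α) (p s : List (α × β)) :
    block i (p ++ s) = block i p ++ block i s :=
  List.filterMap_append

theorem block_singleton (i : α) (j : β) : block i [(i, j)] = [j] := by
  simp [block]

theorem nodup_block {l : List (α × β)} (hl : l.Nodup) (i : α) : (block i l).Nodup :=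
  hl.filterMap (by grind)

theorem singleton_suffix_block {l : List (α × β)} {i : α} {j : β} (h : [(i, j)] <:+ l) :
    [j] <:+ block i l := by
  rw [← block_singleton i j]
  exact h.filterMap _

theorem exists_of_block_eq_append_cons {l : List (α × β)} {i : α} {j : β} {P S : List β}
    (h : block i l = P ++ j :: S) :
    ∃ p s, l = p ++ (i, j) :: s ∧ block i p = P ∧ block i s = S := by
  obtain ⟨p₁, m, rfl, rfl, hm⟩ := List.filterMap_eq_append_iff.1 h
  obtain ⟨p₂, ⟨i', j'⟩, s, rfl, hp₂, hij, rfl⟩ := List.filterMap_eq_cons_iff.1 hm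
  obtain ⟨rfl, rfl⟩ : i' = i ∧ j' = j := by simpa using hij
  have hblock : block i' p₂ = [] := List.filterMap_eq_nil_iff.2 hp₂
  exact ⟨p₁ ++ p₂, s, by simp, by rw [block_append, hblock, List.append_nil]; rfl, rfl⟩

theorem block_eq_nil {i : α} {l : List (α × β)} (hi : i ∉ l.map Prod.fst) : block i l = [] :=
  List.eq_nil_iff_forall_not_mem.2 fun _ hj =>
    hi (List.mem_map_of_mem (f := Prod.fst) (mem_block.1 hj))

variable [Fintype β] [DecidableEq β]

/-- The blocks all of whose indices have been revealed by `l`, in the order of their completion: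
`List.dedup` keeps the last occurrence of every entry. -/
def completed (l : List (α × β)) : List α :=
  (l.map Prod.fst).dedup.filter fun i => ∀ j, (i, j) ∈ l

/-- Alice's strategy for the composed game: she plays `a'` inside each block, but uses the last bit
of a block to make its parity equal to the answer of `a` for that block. -/
def compose (a : List α → Bool) (a' : List β → Bool) (l : List (α × β)) : Bool :=
  match l.getLast? with
  | none => false
  | some (i, j) =>
    if ∀ j', (i, j') ∈ l then
      a (completed l) ^^ parity (Function.update (transcript a' (block i l)) j false)
    else a' (block i l)

/-- The parities of the blocks of `x`. -/
def blockParity (x : α × β → Bool) (i : α) : Bool :=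
  parity fun j => x (i, j)

/-- Bob's strategy for the composed game: he guesses blocks by applying `B` to the block parities
and guesses indices in each of these blocks by applying `B'`. -/
def composeGuess (B : (α → Bool) → Finset α) (B' : (β → Bool) → Finset β) (x : α × β → Bool) :
    Finset (α × β) :=
  (B (blockParity x)).biUnion fun i =>
    (B' fun j => x (i, j)).map (Function.Embedding.sectR i β)

variable {a : List α → Bool} {a' : List β → Bool} {l : List (α × β)} {x : α × β → Bool}

theorem compose_append_singleton (p : List (α × β)) (i : α) (j : β) :
    compose a a' (p ++ [(i, j)]) =
      if ∀ j', (i, j') ∈ p ++ [(i, j)] then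
        a (completed (p ++ [(i, j)])) ^^
          parity (Function.update (transcript a' (block i (p ++ [(i, j)]))) j false)
      else a' (block i (p ++ [(i, j)])) := by
  simp only [compose, List.getLast?_concat]

theorem completed_eq_filter_notMem {q s : List (α × β)} (hnodup : (q ++ s).Nodup)
    (hmem : ∀ g, g ∈ q ++ s) :
    completed q = (q.map Prod.fst).dedup.filter (· ∉ s.map Prod.fst) := by
  have hdisjoint := List.disjoint_of_nodup_append hnodup
  refine List.filter_congr fun i _ => decide_eq_decide.2 ⟨fun hfull hi => ?_, fun hi j => ?_⟩
  · obtain ⟨⟨i, j⟩, hj, rfl⟩ := List.mem_map.1 hi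
    exact hdisjoint (hfull j) hj
  · exact mem_of_notMem_map_fst hmem hi j

theorem isPlay_block (hx : IsPlay (compose a a') l x) (hl : l.Nodup) (i : α) :
    IsPlay a' (block i l) fun j => x (i, j) := by
  intro P j S hblock hS
  obtain ⟨p, s, rfl, rfl, rfl⟩ := exists_of_block_eq_append_cons hblock
  obtain ⟨j', hj'⟩ := List.exists_mem_of_ne_nil _ hS
  have hs : (i, j') ∈ s := mem_block.1 hj'
  have hunfinished : ¬ ∀ j', (i, j') ∈ p ++ [(i, j)] := by
    rw [List.append_cons] at hl
    exact fun hfull => List.disjoint_of_nodup_append hl (hfull j') hs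
  calc x (i, j) = compose a a' (p ++ [(i, j)]) := hx p (i, j) s rfl (List.ne_nil_of_mem hs)
    _ = a' (block i p ++ [j]) := by
      rw [compose_append_singleton, if_neg hunfinished, block_append, block_singleton]

theorem isPlay_blockParity (hx : IsPlay (compose a a') l x) (hnodup : l.Nodup)
    (hmem : ∀ g, g ∈ l) : IsPlay a (l.map Prod.fst).dedup (blockParity x) := by
  intro P i S hdedup hS
  obtain ⟨p₀, s₀, hsplit, hi, rfl, hP⟩ := exists_of_dedup_eq_append_cons hdedup
  obtain ⟨p, m, rfl, rfl, hm⟩ := List.map_eq_append_iff.1 hsplit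
  obtain ⟨⟨i, j⟩, s, rfl, rfl, rfl⟩ := List.map_eq_cons_iff.1 hm
  have hs : s ≠ [] := by
    rintro rfl
    exact hS rfl
  have hbit := hx p (i, j) s rfl hs
  have hlast := isPlay_block hx hnodup i
  rw [List.append_cons] at hnodup hmem hlast
  have hfull : ∀ j', (i, j') ∈ p ++ [(i, j)] := mem_of_notMem_map_fst hmem hi
  have hcompleted : completed (p ++ [(i, j)]) = P ++ [i] := by
    rw [completed_eq_filter_notMem hnodup hmem, List.map_append]
    exact hP
  have hblock : block i (p ++ [(i, j)]) = block i p ++ [j] := by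
    rw [block_append, block_singleton]
  rw [compose_append_singleton, if_pos hfull, hcompleted, hblock] at hbit
  rw [block_append, block_eq_nil hi, List.append_nil, hblock] at hlast
  exact hlast.parity_eq (fun j' => hblock ▸ mem_block.2 (hfull j')) hbit

theorem IsStrategyOn.compose [Nonempty β] {k k' : ℕ} {B : (α → Bool) → Finset α}
    {B' : (β → Bool) → Finset β} (h : IsStrategyOn k a B) (h' : IsStrategyOn k' a' B') :
    IsStrategyOn (k * k') (compose a a') (composeGuess B B') := by
  rintro l ⟨hnodup, hmem⟩ x hx
  have hfst : ∀ i, i ∈ (l.map Prod.fst).dedup := fun i =>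
    List.mem_dedup.2 (List.mem_map_of_mem (f := Prod.fst) (hmem (i, Classical.arbitrary β)))
  obtain ⟨hlast, hcard⟩ :=
    h _ ⟨List.nodup_dedup _, hfst⟩ _ (isPlay_blockParity hx hnodup hmem)
  have hblock := fun i =>
    h' _ ⟨nodup_block hnodup i, fun j => mem_block.2 (hmem (i, j))⟩ _ (isPlay_block hx hnodup i)
  constructor
  · rintro ⟨i, j⟩ hij
    have hi : i ∈ B (blockParity x) := hlast i (singleton_suffix_dedup (hij.map Prod.fst))
    have hj : j ∈ B' fun j => x (i, j) := (hblock i).1 j (singleton_suffix_block hij)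
    exact Finset.mem_biUnion.2 ⟨i, hi, Finset.mem_map_of_mem _ hj⟩
  · calc (composeGuess B B' x).card ≤ (B (blockParity x)).card * k' :=
        Finset.card_biUnion_le_card_mul _ _ _ fun i _ =>
          (Finset.card_map _).trans_le (hblock i).2
      _ ≤ k * k' := Nat.mul_le_mul_right k' hcard

end Composition

theorem HasStrategyOn.prod {α β : Type*} [Finite β] [Nonempty β] {k k' : ℕ}
    (h : HasStrategyOn k α) (h' : HasStrategyOn k' β) : HasStrategyOn (k * k') (α × β) := by
  classical
  have := Fintype.ofFinite β
  obtain ⟨a, B, hB⟩ := h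
  obtain ⟨a', B', hB'⟩ := h'
  exact ⟨compose a a', composeGuess B B', hB.compose hB'⟩

end GKS

/-- If there exists a `(k, n)` strategy and a `(k', n')` strategy for the GKS
game, then there exists a `(k * k', n * n')` strategy for the GKS game. -/
theorem gks_strategy_composition (k n k' n' : ℕ)
    (hk : 0 < k) (hn : 0 < n) (hk' : 0 < k') (hn' : 0 < n')
    (h : HasGKSStrategy k n) (h' : HasGKSStrategy k' n') :
    HasGKSStrategy (k * k') (n * n') := by
  have : Nonempty (Fin n') := ⟨⟨0, hn'⟩⟩
  rw [GKS.hasGKSStrategy_iff_hasStrategyOn] at h h' ⊢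
  exact (h.prod h').congr finProdFinEquiv
end

section
/- There exists an injective function M from the 4-element subsets of Fin 15 into the strings Fin 15 → Bool such that: (1) for every 4-element subset S of Fin 15 and every i ∈ S, the string M(S) has a 1 (true) at position i; and (2) for any two distinct 4-element subsets S and T of Fin 15, the strings M(S) and M(T) differ in at least three positions, i.e., hammingDist (M S) (M T) ≥ 3. -/
/-!
Label the 15 positions by the nonzero vectors of `𝔽₂⁴`; the Hamming code consists of the sets of
positions whose labels sum to zero. Any eight nonzero vectors generate `𝔽₂⁴`, so the code is an
orthogonal array of strength 7: for disjoint sets of positions `S`, `T` with `|S| = 4`, `|T| = 3`,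
exactly `2⁸ / 2⁴ = 16` codewords contain `S` and avoid `T`. Give a codeword `C` the weight
`choose (15 - |C|) 3`, the number of triples it avoids. The codewords containing a given `S` then
have total weight `16 * choose 11 3 = 2640`, while the weight of a codeword times the number of
4-subsets it contains is `choose (15 - w) 3 * choose w 4 ≤ 2520`, where `w = |C|`. Hence Hall's
condition holds for the relation `S ⊆ C`.
-/

open Finset
open scoped symmDiff

theorem exists_injective_of_le_sum_of_card_mul_le {α β R : Type*} [Fintype α] [Fintype β]
    [CommSemiring R] [LinearOrder R] [IsStrictOrderedRing R] (r : α → β → Prop) [DecidableRel r]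
    (w : β → R) {N : R} (hN : 0 < N) (hα : ∀ a, N ≤ ∑ b with r a b, w b)
    (hβ : ∀ b, #{a | r a b} * w b ≤ N) :
    ∃ f : α → β, Function.Injective f ∧ ∀ a, r a (f a) := by
  refine (Fintype.all_card_le_filter_rel_iff_exists_injective r).mp fun A ↦ ?_
  have card_mul_le (b : β) : #{a ∈ A | r a b} * w b ≤ N := by
    rcases le_total (w b) 0 with hb | hb
    · exact (mul_nonpos_of_nonneg_of_nonpos (Nat.cast_nonneg _) hb).trans hN.le
    · refine le_trans ?_ (hβ b)
      gcongr
      exact A.subset_univ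
  have key : (#A : R) * N ≤ #{b | ∃ a ∈ A, r a b} * N := calc
    (#A : R) * N ≤ ∑ a ∈ A, ∑ b with r a b, w b := by
      simpa using card_nsmul_le_sum A _ N fun a _ ↦ hα a
    _ = ∑ b with ∃ a ∈ A, r a b, ∑ a ∈ A with r a b, w b :=
      sum_comm' fun a b ↦ by simp only [mem_filter, mem_univ, true_and]; grind
    _ = ∑ b with ∃ a ∈ A, r a b, #{a ∈ A | r a b} * w b := by simp
    _ ≤ #{b | ∃ a ∈ A, r a b} * N := by
      simpa using sum_le_card_nsmul _ _ N fun b _ ↦ card_mul_le b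
  exact_mod_cast le_of_mul_le_mul_right key hN

section SubsetSums

variable {ι V : Type*} [DecidableEq ι] [AddCommGroup V] [Module (ZMod 2) V]

theorem sum_symmDiff_eq_add (h : ι → V) (A B : Finset ι) :
    ∑ i ∈ A ∆ B, h i = ∑ i ∈ A, h i + ∑ i ∈ B, h i := by
  have hA := sum_sdiff (f := h) (inter_subset_left : A ∩ B ⊆ A)
  have hB := sum_sdiff (f := h) (inter_subset_right : A ∩ B ⊆ B)
  rw [sdiff_inter_self_left] at hA
  rw [sdiff_inter_self_right] at hB
  rw [← hA, ← hB, add_add_add_comm, ZModModule.add_self, add_zero]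
  exact sum_union disjoint_sdiff_sdiff

/-- The subgroup of all sums of `h` over subsets of `T`, that is, the span of `h` on `T`. -/
def subsetSums (h : ι → V) (T : Finset ι) : AddSubgroup V where
  carrier := {v | ∃ U ⊆ T, ∑ i ∈ U, h i = v}
  zero_mem' := ⟨∅, T.empty_subset, sum_empty⟩
  add_mem' := by
    rintro _ _ ⟨A, hA, rfl⟩ ⟨B, hB, rfl⟩
    exact ⟨A ∆ B, symmDiff_subset_union.trans (union_subset hA hB), sum_symmDiff_eq_add h A B⟩
  neg_mem' := by
    rintro _ ⟨A, hA, rfl⟩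
    exact ⟨A, hA, (ZModModule.neg_eq_self _).symm⟩

theorem mem_subsetSums {h : ι → V} {T : Finset ι} {v : V} :
    v ∈ subsetSums h T ↔ ∃ U ⊆ T, ∑ i ∈ U, h i = v := Iff.rfl

theorem subsetSums_eq_top [Finite V] {h : ι → V} {T : Finset ι} (h_inj : Set.InjOn h T)
    (h_ne : ∀ i ∈ T, h i ≠ 0) (hT : Nat.card V < 2 * (#T + 1)) : subsetSums h T = ⊤ := by
  classical
  have subset : (↑(insert 0 (T.image h)) : Set V) ⊆ subsetSums h T := by
    simp only [coe_insert, coe_image, Set.insert_subset_iff, SetLike.mem_coe, zero_mem, true_and]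
    rintro _ ⟨i, hi, rfl⟩
    exact ⟨{i}, singleton_subset_iff.mpr hi, sum_singleton _ _⟩
  have card_le : #T + 1 ≤ Nat.card (subsetSums h T) := by
    rw [← card_image_of_injOn h_inj, ← card_insert_of_notMem (a := 0) (by simpa using h_ne),
      ← Set.ncard_coe_finset]
    exact Set.ncard_le_ncard subset
  have index_lt : (subsetSums h T).index < 2 := by
    have := (subsetSums h T).card_mul_index
    by_contra!
    nlinarith
  have := (subsetSums h T).index_ne_zero_of_finite
  exact AddSubgroup.index_eq_one.mp (by lia)

theorem card_subsets_sum_eq_mul_card [Fintype V] [DecidableEq V] {h : ι → V} {T : Finset ι}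
    (hT : subsetSums h T = ⊤) (v : V) :
    #{U ∈ T.powerset | ∑ i ∈ U, h i = v} * Fintype.card V = 2 ^ #T := by
  have card_le (u v : V) :
      #{U ∈ T.powerset | ∑ i ∈ U, h i = u} ≤ #{U ∈ T.powerset | ∑ i ∈ U, h i = v} := by
    obtain ⟨W, hWT, hW⟩ := mem_subsetSums.mp (hT ▸ AddSubgroup.mem_top (v - u))
    refine card_le_card_of_injOn (· ∆ W) (fun U hU ↦ ?_) (symmDiff_left_injective W).injOn
    simp only [coe_filter, mem_powerset, Set.mem_ofPred_eq] at hU ⊢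
    refine ⟨symmDiff_subset_union.trans (union_subset hU.1 hWT), ?_⟩
    rw [sum_symmDiff_eq_add, hU.2, hW, add_sub_cancel]
  calc
    #{U ∈ T.powerset | ∑ i ∈ U, h i = v} * Fintype.card V
    _ = ∑ u : V, #{U ∈ T.powerset | ∑ i ∈ U, h i = u} := by
      rw [sum_congr rfl fun u _ ↦ (card_le u v).antisymm (card_le v u), sum_const, card_univ,
        smul_eq_mul, mul_comm]
    _ = #T.powerset := (card_eq_sum_card_fiberwise fun _ _ ↦ mem_univ _).symm
    _ = 2 ^ #T := card_powerset T

end SubsetSums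

section Codewords

variable {ι V : Type*} [AddCommGroup V]

/-- The words of the binary linear code whose parity-check matrix has columns `h i`, encoded by
their supports. It is a Hamming code when `h` enumerates the nonzero vectors of `V`. -/
def IsCodeword (h : ι → V) (C : Finset ι) : Prop := ∑ i ∈ C, h i = 0

instance [DecidableEq V] (h : ι → V) : DecidablePred (IsCodeword h) :=
  fun C ↦ inferInstanceAs (Decidable (∑ i ∈ C, h i = 0))

variable [Module (ZMod 2) V] {h : ι → V}

theorem IsCodeword.three_le_card {C : Finset ι} (hC : IsCodeword h C) (h_inj : Function.Injective h)
    (h_ne : ∀ i, h i ≠ 0) (hC_ne : C.Nonempty) : 3 ≤ #C := by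
  classical
  by_contra! hlt
  obtain hcard | hcard : #C = 1 ∨ #C = 2 := by have := hC_ne.card_pos; lia
  · obtain ⟨i, rfl⟩ := card_eq_one.mp hcard
    exact h_ne i ((sum_singleton h i).symm.trans hC)
  · obtain ⟨i, j, hij, rfl⟩ := card_eq_two.mp hcard
    have hsum : h i + h j = 0 := (sum_pair hij).symm.trans hC
    exact hij (h_inj ((eq_neg_of_add_eq_zero_left hsum).trans (ZModModule.neg_eq_self _)))

variable [DecidableEq ι]

theorem IsCodeword.symmDiff {C D : Finset ι} (hC : IsCodeword h C) (hD : IsCodeword h D) :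
    IsCodeword h (C ∆ D) := by
  rw [IsCodeword, sum_symmDiff_eq_add, hC, hD, add_zero]

theorem IsCodeword.three_le_card_symmDiff {C D : Finset ι} (hC : IsCodeword h C)
    (hD : IsCodeword h D) (h_inj : Function.Injective h) (h_ne : ∀ i, h i ≠ 0) (hCD : C ≠ D) :
    3 ≤ #(C ∆ D) :=
  (hC.symmDiff hD).three_le_card h_inj h_ne (symmDiff_nonempty.mpr hCD)

variable [Fintype ι] [Fintype V] [DecidableEq V]

-- The codewords in question are the sets `S ∪ U` with `U ⊆ (S ∪ T)ᶜ` and `∑ U = -∑ S`.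
theorem card_codewords_superset_disjoint {S T : Finset ι} (hST : Disjoint S T)
    (h_top : subsetSums h (S ∪ T)ᶜ = ⊤) :
    #{C | (IsCodeword h C ∧ S ⊆ C) ∧ Disjoint T C} * Fintype.card V = 2 ^ #(S ∪ T)ᶜ := by
  rw [← card_subsets_sum_eq_mul_card h_top (-∑ i ∈ S, h i)]
  congr 1
  refine card_nbij' (· \ S) (S ∪ ·) ?_ ?_ ?_ ?_
  · intro C hC
    simp only [coe_filter, mem_univ, true_and, Set.mem_ofPred_eq, mem_powerset] at hC ⊢
    obtain ⟨⟨hC, hSC⟩, hTC⟩ := hC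
    refine ⟨?_, eq_neg_of_add_eq_zero_left ((sum_sdiff hSC).trans hC)⟩
    grind [Finset.disjoint_left, Finset.mem_compl]
  · intro U hU
    simp only [coe_filter, mem_univ, true_and, Set.mem_ofPred_eq, mem_powerset] at hU ⊢
    obtain ⟨hU, hsum⟩ := hU
    have hSU : Disjoint S U := by grind [Finset.disjoint_left, Finset.mem_compl]
    refine ⟨⟨?_, subset_union_left⟩, by grind [Finset.disjoint_left, Finset.mem_compl]⟩
    rw [IsCodeword, sum_union hSU, hsum, add_neg_cancel]
  · intro C hC
    simp only [coe_filter, mem_univ, true_and, Set.mem_ofPred_eq] at hC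
    exact union_sdiff_of_subset hC.1.2
  · intro U hU
    simp only [coe_filter, mem_powerset, Set.mem_ofPred_eq] at hU
    grind [Finset.mem_compl]

theorem sum_choose_card_compl_codewords_superset (h_inj : Function.Injective h)
    (h_ne : ∀ i, h i ≠ 0) {k l : ℕ}
    (hkl : Fintype.card V + 2 * (k + l) < 2 * (Fintype.card ι + 1)) {S : Finset ι} (hS : #S = k) :
    (∑ C with IsCodeword h C ∧ S ⊆ C, (#Cᶜ).choose l) * Fintype.card V =
      (Fintype.card ι - k).choose l * 2 ^ (Fintype.card ι - (k + l)) := by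
  have card_eq {T : Finset ι} (hT : T ∈ powersetCard l Sᶜ) :
      #{C | (IsCodeword h C ∧ S ⊆ C) ∧ Disjoint T C} * Fintype.card V =
        2 ^ (Fintype.card ι - (k + l)) := by
    obtain ⟨hTS, hT⟩ := mem_powersetCard.mp hT
    have hST : Disjoint S T := subset_compl_iff_disjoint_left.mp hTS
    have hcard : #(S ∪ T)ᶜ = Fintype.card ι - (k + l) := by
      rw [card_compl, card_union_of_disjoint hST, hS, hT]
    rw [← hcard]
    refine card_codewords_superset_disjoint hST
      (subsetSums_eq_top h_inj.injOn (fun i _ ↦ h_ne i) ?_)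
    rw [Nat.card_eq_fintype_card]
    lia
  calc
    (∑ C with IsCodeword h C ∧ S ⊆ C, (#Cᶜ).choose l) * Fintype.card V
    _ = (∑ C with IsCodeword h C ∧ S ⊆ C, ∑ T ∈ powersetCard l Cᶜ, 1) * Fintype.card V := by simp
    _ = (∑ T ∈ powersetCard l Sᶜ, ∑ C with (IsCodeword h C ∧ S ⊆ C) ∧ Disjoint T C, 1) *
        Fintype.card V := by
      congr 1
      refine sum_comm' fun C T ↦ ?_
      simp only [mem_filter, mem_univ, true_and, mem_powersetCard, subset_compl_iff_disjoint_right]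
      grind [Finset.disjoint_left, Finset.mem_compl]
    _ = ∑ T ∈ powersetCard l Sᶜ, 2 ^ (Fintype.card ι - (k + l)) := by
      simp_rw [← card_eq_sum_ones, sum_mul]
      exact sum_congr rfl fun T hT ↦ card_eq hT
    _ = (Fintype.card ι - k).choose l * 2 ^ (Fintype.card ι - (k + l)) := by simp [card_compl, hS]

end Codewords

theorem exists_injective_superset_codeword {ι V : Type*} [Fintype ι] [AddCommGroup V]
    [Module (ZMod 2) V] [Fintype V] {h : ι → V} (h_inj : Function.Injective h)
    (h_ne : ∀ i, h i ≠ 0) {k l : ℕ}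
    (hkl : Fintype.card V + 2 * (k + l) < 2 * (Fintype.card ι + 1))
    (h_choose : ∀ w ≤ Fintype.card ι,
      w.choose k * ((Fintype.card ι - w).choose l * Fintype.card V) ≤
        (Fintype.card ι - k).choose l * 2 ^ (Fintype.card ι - (k + l))) :
    ∃ M : {S : Finset ι // #S = k} → Finset ι,
      Function.Injective M ∧ ∀ S, IsCodeword h (M S) ∧ S.1 ⊆ M S := by
  classical
  refine exists_injective_of_le_sum_of_card_mul_le
    (fun (S : {S : Finset ι // #S = k}) C ↦ IsCodeword h C ∧ S.1 ⊆ C)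
    (fun C ↦ (#Cᶜ).choose l * Fintype.card V) ?_
    (fun S ↦ (sum_choose_card_compl_codewords_superset h_inj h_ne hkl S.2).ge.trans_eq
      (sum_mul _ _ _)) fun C ↦ ?_
  · have := Fintype.card_pos (α := V)
    have : 0 < (Fintype.card ι - k).choose l := Nat.choose_pos (by lia)
    positivity
  · have card_le : #{S : {S : Finset ι // #S = k} | IsCodeword h C ∧ S.1 ⊆ C} ≤ (#C).choose k := by
      rw [← card_powersetCard]
      refine card_le_card_of_injOn Subtype.val (fun S hS ↦ ?_) Subtype.val_injective.injOn
      simp only [coe_filter, mem_univ, true_and, Set.mem_ofPred_eq] at hS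
      exact mem_powersetCard.mpr ⟨hS.2, S.2⟩
    refine (Nat.mul_le_mul_right _ card_le).trans ?_
    rw [card_compl]
    exact h_choose _ (card_le_univ C)

theorem hammingDist_decide_mem {ι : Type*} [Fintype ι] [DecidableEq ι] (C D : Finset ι) :
    hammingDist (fun i ↦ decide (i ∈ C)) (fun i ↦ decide (i ∈ D)) = #(C ∆ D) := by
  unfold hammingDist
  congr 1
  ext i
  simp only [ne_eq, decide_eq_decide, mem_filter, mem_univ, true_and, mem_symmDiff]
  tauto

/-- There exists an injective matching `M` from the 4-element subsets of
`Fin 15` into binary strings of length 15 such that: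
(1) for every 4-element subset `S` and every `i ∈ S`, the string `M S` has a
one (`true`) at position `i`; and
(2) the strings matched to two distinct 4-element subsets have Hamming
distance at least 3. -/
theorem exists_matching_subsets_to_codewords :
    ∃ M : {S : Finset (Fin 15) // S.card = 4} → (Fin 15 → Bool),
      Function.Injective M ∧
      (∀ S : {S : Finset (Fin 15) // S.card = 4}, ∀ i ∈ S.1, M S i = true) ∧
      (∀ S T : {S : Finset (Fin 15) // S.card = 4},
        S ≠ T → 3 ≤ hammingDist (M S) (M T)) := by
  obtain ⟨e⟩ : Nonempty (Fin 15 ≃ {v : Fin 4 → ZMod 2 // v ≠ 0}) :=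
    Fintype.card_eq.mp (by simp [Fintype.card_subtype_compl])
  have h_inj : Function.Injective fun i ↦ (e i).1 := Subtype.val_injective.comp e.injective
  have h_ne (i : Fin 15) : (e i).1 ≠ 0 := (e i).2
  have h_choose : ∀ w ≤ 15, w.choose 4 * ((15 - w).choose 3 * 16) ≤ (15 - 4).choose 3 * 2 ^ 8 := by
    decide
  obtain ⟨M, M_inj, hM⟩ := exists_injective_superset_codeword h_inj h_ne (k := 4) (l := 3)
    (by simp) (by simpa using h_choose)
  have dist_le (S T : {S : Finset (Fin 15) // S.card = 4}) (hST : S ≠ T) :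
      3 ≤ hammingDist (fun i ↦ decide (i ∈ M S)) (fun i ↦ decide (i ∈ M T)) := by
    rw [hammingDist_decide_mem]
    exact (hM S).1.three_le_card_symmDiff (hM T).1 h_inj h_ne (M_inj.ne hST)
  refine ⟨fun S i ↦ decide (i ∈ M S), fun S T hST ↦ ?_, fun S i hi ↦ decide_eq_true ((hM S).2 hi),
    dist_le⟩
  by_contra hne
  exact ((hammingDist_eq_zero.mpr hST).trans_lt three_pos).not_ge (dist_le S T hne)
end
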